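/- arXiv:1209.1916 — 3 statements merged into one kernel-verified Lean document; each statement's English description precedes it below -/
import Mathlib

section
/- Let M be an ordered multi-pushdown automaton with n stacks in normal form, M_{[1,n[} the OMPA obtained from M by discarding all transitions that pop from the n-th stack, and M' the associated (n−1)-stack OMPA over input alphabet Γ. Then for all states q, q' and all stack contents w₁,…,wₙ, w'₁,…,w'ₙ: the configuration (q,w₁,…,wₙ) reaches (q',w'₁,…,w'ₙ) by a finite run of T(M_{[1,n[}) (labelled by some τ ∈ Σ*) if and only if there exists a word u ∈ Γ* such that (q,w₁,…,w_{n−1}) reaches (q',w'₁,…,w'_{n−1}) by a finite run of T(M') labelled by u and w'ₙ = u^R wₙ. -/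
/-!
Once no transition pops from the last stack, that stack is write-only. In normal form each
transition then pushes at most one symbol on it, so the pushed word is `b.toList` for some
`b : Option Γ`, which is exactly the letter read by the projected automaton
(`MPA.exists_push_last`). Forgetting the last stack is therefore a correspondence between single
steps (`MPA.step_restrictLast`, `MPA.step_proj`), and induction on runs gives the theorem: symbols
pushed later end up higher on the stack, hence the reversal of `u`.

A step of `T(M)` requires every stack to be well formed, whereas a step of `T(M')` says nothing
about the last stack. From right to left this is recovered by an invariant: well-formedness of the
last stack is preserved because `M.WF` forbids pushing `⊥` on a stack it was not popped from.
-/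

/-- A run of a labeled transition relation (labels in `A ∪ {ε}`) reading a word. -/
inductive EvalRel {Q A : Type} (Δ : Q → Option A → Q → Prop) : Q → List A → Q → Prop
  | refl (q : Q) : EvalRel Δ q [] q
  | step {q : Q} {a : Option A} {q' : Q} {w : List A} {q'' : Q} :
      Δ q a q' → EvalRel Δ q' w q'' → EvalRel Δ q (a.toList ++ w) q''

/-- The set of all predecessors (`Pre*`) of `S` under the step relation `r`. -/
def preStar {C : Type} (r : C → C → Prop) (S : Set C) : Set C :=
  {c | ∃ c' ∈ S, Relation.ReflTransGen r c c'}

/-- `Pre⁺ = Pre ∘ Pre*`. -/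
def prePlus {C : Type} (r : C → C → Prop) (S : Set C) : Set C :=
  {c | ∃ c₁, r c c₁ ∧ c₁ ∈ preStar r S}

/-- A multi-pushdown automaton with `n` stacks, states `Q`, input alphabet `A`, and
stack alphabet `Γ` (with distinguished bottom symbol `bot`).  A transition
`Δ q γ a q' α` pops `γ i ∈ Γ ∪ {ε}` from stack `i` and pushes the word `α i` on stack `i`,
for each `i`, reading the input letter `a ∈ A ∪ {ε}`. -/
structure MPA (n : ℕ) (Q A Γ : Type) where
  bot : Γ
  Δ : Q → (Fin n → Option Γ) → Option A → Q → (Fin n → List Γ) → Prop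
  q0 : Q
  γ0 : Γ
  F : Set Q

namespace MPA

variable {n : ℕ} {Q A Γ : Type}

/-- A stack content: a word in `(Γ∖{⊥})* ⬝ {⊥}`. -/
def IsStack (bot : Γ) (w : List Γ) : Prop := ∃ v, w = v ++ [bot] ∧ bot ∉ v

/-- Well-formedness of an MPA: `γ₀ ≠ ⊥`, and each transition pushes at most two symbols on
each stack, never pushes `⊥` on a stack unless it popped `⊥` from it, and when popping `⊥`
from a stack it pushes back `α' ⬝ ⊥` with `α' ∈ (Γ∖{⊥}) ∪ {ε}`. -/
def WF (M : MPA n Q A Γ) : Prop :=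
  M.γ0 ≠ M.bot ∧
  ∀ q γ a q' α, M.Δ q γ a q' α → ∀ i : Fin n,
    (α i).length ≤ 2 ∧
    (γ i ≠ some M.bot → M.bot ∉ α i) ∧
    (γ i = some M.bot → ∃ β, α i = β ++ [M.bot] ∧ M.bot ∉ β ∧ β.length ≤ 1)

/-- An MPA is *ordered* if every transition pops from the first non-empty stack: there is `i`
such that stacks before `i` pop `⊥`, stack `i` pops an element of `Γ ∪ {ε}`, and stacks
after `i` pop nothing. -/
def Ordered (M : MPA n Q A Γ) : Prop :=
  ∀ q γ a q' α, M.Δ q γ a q' α → ∃ i : Fin n,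
    (∀ j, j < i → γ j = some M.bot) ∧ (∀ j, i < j → γ j = none)

/-- One transition of the transition system `T(M)`: for each stack `i`, the popped prefix
`γ i` of the stack content is replaced by the pushed word `α i`. -/
def Step (M : MPA n Q A Γ) (c : Q × (Fin n → List Γ)) (a : Option A)
    (c' : Q × (Fin n → List Γ)) : Prop :=
  ∃ (γ : Fin n → Option Γ) (α w : Fin n → List Γ), M.Δ c.1 γ a c'.1 α ∧
    ∀ i : Fin n, c.2 i = (γ i).toList ++ w i ∧ c'.2 i = α i ++ w i ∧ IsStack M.bot (c.2 i)

/-- A finite run of `T(M)` from `c` to `c'` labelled by the word `τ`. -/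
inductive Reaches (M : MPA n Q A Γ) :
    Q × (Fin n → List Γ) → List A → Q × (Fin n → List Γ) → Prop
  | refl (c : Q × (Fin n → List Γ)) : Reaches M c [] c
  | step {c : Q × (Fin n → List Γ)} {a : Option A} {c' : Q × (Fin n → List Γ)}
      {τ : List A} {c'' : Q × (Fin n → List Γ)} :
      M.Step c a c' → Reaches M c' τ c'' → Reaches M c (a.toList ++ τ) c''

/-- The unlabeled step relation of `T(M)`. -/
def StepAny (M : MPA n Q A Γ) (c c' : Q × (Fin n → List Γ)) : Prop := ∃ a, M.Step c a c'

/-- An ordered MPA (with at least one stack) is in *normal form* if every transition either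
(i) pops a symbol from the first stack, pushing at most two symbols on the first stack and at
most one non-`⊥` symbol on each of the other stacks, or (ii) pops a non-`⊥` symbol from some
stack `i ≥ 2` whose preceding stacks are empty, pushing a single non-`⊥` symbol on the first
stack (and restoring `⊥` on stacks `2,…,i−1`). -/
def NormalForm (M : MPA (n+1) Q A Γ) : Prop :=
  ∀ q γ a q' α, M.Δ q γ a q' α →
    ((∃ g : Γ, γ 0 = some g) ∧ (∀ j, j ≠ 0 → γ j = none) ∧
      (∀ j, j ≠ 0 → (α j).length ≤ 1 ∧ M.bot ∉ α j)) ∨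
    (∃ i : Fin (n+1), 0 < i ∧
      (∀ j, j < i → γ j = some M.bot) ∧ (∀ j, i < j → γ j = none) ∧
      (∃ g : Γ, γ i = some g ∧ g ≠ M.bot) ∧
      (∃ g' : Γ, g' ≠ M.bot ∧ α 0 = [g', M.bot]) ∧
      (∀ j, 0 < j → j < i → α j = [M.bot]) ∧ (∀ j, i ≤ j → α j = []))

/-- The initial stack contents: `γ₀⊥` on the first stack and `⊥` on the others. -/
def init (M : MPA (n+1) Q A Γ) : Fin (n+1) → List Γ :=
  fun i => if i = 0 then [M.γ0, M.bot] else [M.bot]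

/-- The language of an MPA: words labelling runs of `T(M)` from `(q₀,γ₀⊥,⊥,…,⊥)` to a final
configuration `(q,⊥,…,⊥)` with `q ∈ F`. -/
def Lang (M : MPA (n+1) Q A Γ) : Set (List A) :=
  {τ | ∃ q ∈ M.F, M.Reaches (M.q0, M.init) τ (q, fun _ => [M.bot])}

/-- The size `|M| = n + |Q| + |Σ| + |Γ| + |Δ|` of an MPA. -/
noncomputable def size (M : MPA n Q A Γ) : ℕ :=
  n + Nat.card Q + Nat.card A + Nat.card Γ +
    Nat.card {t : Q × (Fin n → Option Γ) × Option A × Q × (Fin n → List Γ) //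
      M.Δ t.1 t.2.1 t.2.2.1 t.2.2.2.1 t.2.2.2.2}

end MPA

namespace MPA

variable {n : ℕ} {Q A Γ : Type}

/-- `M_{[1,n[}`: the MPA obtained from `M` by discarding all transitions that pop from the
last stack. -/
def restrictLast (M : MPA (n+1) Q A Γ) : MPA (n+1) Q A Γ :=
  { M with Δ := fun q γ a q' α => M.Δ q γ a q' α ∧ γ (Fin.last n) = none }

/-- `M'`: the `n`-stack MPA over input alphabet `Γ` that performs the transitions of
`M_{[1,n[}` on the first `n` stacks and makes the pushed symbol (an element of `Γ ∪ {ε}`)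
on the last stack visible as input label. -/
def proj (M : MPA (n+1) Q A Γ) : MPA n Q Γ Γ where
  bot := M.bot
  Δ := fun q γ b q' α =>
    ∃ a : Option A, M.Δ q (Fin.snoc γ none) a q' (Fin.snoc α b.toList)
  q0 := M.q0
  γ0 := M.γ0
  F := M.F

/-- `L(M(q,γ,q'))`: the words labelling runs of `T(M)` from `(q, γ⊥, ⊥, …, ⊥)` to
`(q', ⊥, …, ⊥)`. -/
def LangFrom (M : MPA (n+1) Q A Γ) (q : Q) (γ : Γ) (q' : Q) : Set (List A) :=
  {τ | M.Reaches (q, fun i => if i = 0 then [γ, M.bot] else [M.bot]) τ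
        (q', fun _ => [M.bot])}

end MPA

namespace MPA

variable {n : ℕ} {Q A Γ : Type}

/-- In normal form, a transition that does not pop from the last stack pushes at most one symbol
there. -/
lemma exists_push_last {M : MPA (n+1) Q A Γ} (hnf : M.NormalForm) {q q' : Q}
    {γ : Fin (n+1) → Option Γ} {a : Option A} {α : Fin (n+1) → List Γ}
    (h : M.Δ q γ a q' α) (hγ : γ (Fin.last n) = none) :
    ∃ b : Option Γ, α (Fin.last n) = b.toList := by
  rcases hnf q γ a q' α h with ⟨⟨g, hg⟩, -, hα⟩ | ⟨i, -, -, -, ⟨g, hg, -⟩, -, -, hα⟩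
  · have h0 : Fin.last n ≠ 0 := by
      intro h0
      rw [h0, hg] at hγ
      cases hγ
    have hlen := (hα _ h0).1
    match hαl : α (Fin.last n), hlen with
    | [], _ => exact ⟨none, rfl⟩
    | [x], _ => exact ⟨some x, rfl⟩
    | x :: y :: l, hlen => simp at hlen
  · exact ⟨none, hα _ (Fin.le_last i)⟩

lemma isStack_append {bot : Γ} {u w : List Γ} (hu : bot ∉ u) (hw : IsStack bot w) :
    IsStack bot (u ++ w) := by
  obtain ⟨v, rfl, hv⟩ := hw
  exact ⟨u ++ v, by simp, by simp [hu, hv]⟩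

/-- A step of `T(M_{[1,n[})` projects to a step of `T(M')` whose label is what was pushed on the
last stack. -/
lemma step_restrictLast {M : MPA (n+1) Q A Γ} (hnf : M.NormalForm)
    {c c' : Q × (Fin (n+1) → List Γ)} {a : Option A} (h : M.restrictLast.Step c a c') :
    ∃ b : Option Γ,
      M.proj.Step (c.1, fun i => c.2 i.castSucc) b (c'.1, fun i => c'.2 i.castSucc) ∧
      c'.2 (Fin.last n) = b.toList ++ c.2 (Fin.last n) := by
  obtain ⟨γ, α, w, ⟨hΔ, hγ⟩, hs⟩ := h
  obtain ⟨b, hb⟩ := exists_push_last hnf hΔ hγ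
  refine ⟨b, ⟨fun i => γ i.castSucc, fun i => α i.castSucc, fun i => w i.castSucc, ⟨a, ?_⟩,
    fun i => hs i.castSucc⟩, ?_⟩
  · have h1 : (Fin.snoc (fun i => γ i.castSucc) none : Fin (n+1) → Option Γ) = γ := by
      rw [← hγ]; exact Fin.snoc_init_self γ
    have h2 : (Fin.snoc (fun i => α i.castSucc) b.toList : Fin (n+1) → List Γ) = α := by
      rw [← hb]; exact Fin.snoc_init_self α
    rw [h1, h2]
    exact hΔ
  · obtain ⟨h1, h2, -⟩ := hs (Fin.last n)
    rw [h2, h1, hγ, hb]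
    simp

/-- A step of `T(M')` labelled `b` lifts to a step of `T(M_{[1,n[})` pushing `b` on any given
well-formed last stack `v`, which stays well formed. -/
lemma step_proj {M : MPA (n+1) Q A Γ} (hwf : M.WF)
    {c c' : Q × (Fin n → List Γ)} {b : Option Γ} (h : M.proj.Step c b c')
    {v : List Γ} (hv : IsStack M.bot v) :
    IsStack M.bot (b.toList ++ v) ∧
    ∃ a : Option A, M.restrictLast.Step (c.1, Fin.snoc c.2 v) a
      (c'.1, Fin.snoc c'.2 (b.toList ++ v)) := by
  obtain ⟨γ, α, w, ⟨a, hΔ⟩, hs⟩ := h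
  have hb : M.bot ∉ b.toList := by
    simpa using (hwf.2 _ _ _ _ _ hΔ (Fin.last n)).2.1
  refine ⟨isStack_append hb hv, a, Fin.snoc γ none, Fin.snoc α b.toList, Fin.snoc w v,
    ⟨hΔ, by simp⟩, fun i => ?_⟩
  induction i using Fin.lastCases with
  | last =>
    simp only [Fin.snoc_last, Option.toList_none, List.nil_append, true_and]
    exact hv
  | cast i =>
    simp only [Fin.snoc_castSucc]
    exact hs i

lemma reaches_restrictLast {M : MPA (n+1) Q A Γ} (hnf : M.NormalForm)
    {c c' : Q × (Fin (n+1) → List Γ)} {τ : List A} (h : M.restrictLast.Reaches c τ c') :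
    ∃ u : List Γ,
      M.proj.Reaches (c.1, fun i => c.2 i.castSucc) u (c'.1, fun i => c'.2 i.castSucc) ∧
      c'.2 (Fin.last n) = u.reverse ++ c.2 (Fin.last n) := by
  induction h with
  | refl c => exact ⟨[], .refl _, rfl⟩
  | step hstep _ ih =>
    obtain ⟨u, hu, hlast⟩ := ih
    obtain ⟨b, hb, hblast⟩ := step_restrictLast hnf hstep
    refine ⟨b.toList ++ u, .step hb hu, ?_⟩
    rw [hlast, hblast]
    cases b <;> simp

lemma reaches_proj {M : MPA (n+1) Q A Γ} (hwf : M.WF)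
    {c c' : Q × (Fin n → List Γ)} {u : List Γ} (h : M.proj.Reaches c u c')
    {v : List Γ} (hv : IsStack M.bot v) :
    ∃ τ : List A, M.restrictLast.Reaches (c.1, Fin.snoc c.2 v) τ
      (c'.1, Fin.snoc c'.2 (u.reverse ++ v)) := by
  induction h generalizing v with
  | refl c => exact ⟨[], .refl _⟩
  | @step c b c₁ u c' hstep _ ih =>
    obtain ⟨hv', a, ha⟩ := step_proj hwf hstep hv
    obtain ⟨τ, hτ⟩ := ih hv'
    refine ⟨a.toList ++ τ, .step ha ?_⟩
    have hrev : (b.toList ++ u).reverse ++ v = u.reverse ++ (b.toList ++ v) := by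
      cases b <;> simp
    rwa [hrev]

end MPA


/-- For an ordered MPA `M` in normal form, a run of `T(M_{[1,n[})` between
configurations corresponds exactly to a run of the projected `(n−1)`-stack OMPA `M'` on the
first `n−1` stacks whose label `u` satisfies `w'ₙ = u^R wₙ`. -/
theorem ompa_proj_correct {n : ℕ} {Q A Γ : Type} [Finite Q] [Finite A] [Finite Γ]
    (M : MPA (n+1) Q A Γ) (hwf : M.WF) (hord : M.Ordered) (hnf : M.NormalForm)
    (q q' : Q) (w w' : Fin (n+1) → List Γ)
    (hw : ∀ i, MPA.IsStack M.bot (w i)) (hw' : ∀ i, MPA.IsStack M.bot (w' i)) :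
    (∃ τ : List A, (MPA.restrictLast M).Reaches (q, w) τ (q', w')) ↔
    (∃ u : List Γ,
      (MPA.proj M).Reaches (q, fun i => w i.castSucc) u (q', fun i => w' i.castSucc) ∧
      w' (Fin.last n) = u.reverse ++ w (Fin.last n)) := by
  constructor
  · rintro ⟨τ, h⟩
    exact MPA.reaches_restrictLast hnf h
  · rintro ⟨u, h, hlast⟩
    obtain ⟨τ, hτ⟩ := MPA.reaches_proj hwf h (hw (Fin.last n))
    refine ⟨τ, ?_⟩
    have h1 : (Fin.snoc (fun i => w i.castSucc) (w (Fin.last n)) : Fin (n+1) → List Γ) = w :=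
      Fin.snoc_init_self w
    have h2 : (Fin.snoc (fun i => w' i.castSucc) (w' (Fin.last n)) : Fin (n+1) → List Γ) = w' :=
      Fin.snoc_init_self w'
    rw [← hlast] at hτ
    simp only [h1, h2] at hτ
    exact hτ
end

section
/- Let M be an ordered multi-pushdown automaton with n > 1 stacks in normal form and P the generalized pushdown automaton constructed from M. Then L(M) ≠ ∅ if and only if L(P) ≠ ∅. -/
/-- A generalized pushdown automaton over states `P`, input alphabet `A`, stack alphabet `Γ`. -/
structure GPA (P A Γ : Type) where
  δ : P → Γ → Option A → P → Set (List Γ)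
  p0 : P
  γ0 : Γ
  F : Set P

namespace GPA

variable {P A Γ : Type}

/-- One transition of the transition system `T(P)` of a GPA: being in `(p, γ·w)` and
reading `a`, move to `(p', u·w)` for some `u ∈ δ(p,γ,a,p')`. -/
def Step (M : GPA P A Γ) (c : P × List Γ) (a : Option A) (c' : P × List Γ) : Prop :=
  ∃ γ w u, c.2 = γ :: w ∧ u ∈ M.δ c.1 γ a c'.1 ∧ c'.2 = u ++ w

/-- A finite run of `T(P)` from `c` to `c'` labelled by the word `τ`. -/
inductive Reaches (M : GPA P A Γ) : P × List Γ → List A → P × List Γ → Prop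
  | refl (c : P × List Γ) : Reaches M c [] c
  | step {c : P × List Γ} {a : Option A} {c' : P × List Γ} {τ : List A} {c'' : P × List Γ} :
      M.Step c a c' → Reaches M c' τ c'' → Reaches M c (a.toList ++ τ) c''

/-- The unlabeled step relation of `T(P)`. -/
def StepAny (M : GPA P A Γ) (c c' : P × List Γ) : Prop := ∃ a, M.Step c a c'

/-- The language accepted by a GPA: words labelling runs from `(p₀,γ₀)` to `F × {ε}`. -/
def Lang (M : GPA P A Γ) : Set (List A) :=
  {τ | ∃ p ∈ M.F, M.Reaches (M.p0, [M.γ0]) τ (p, [])}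

end GPA

/-- The generalized pushdown automaton `P` constructed from an ordered MPA `M` (in normal
form, with at least two stacks): its states are `Q ∪ {p₀, p_f}` (here `Sum.inr false = p₀`
and `Sum.inr true = p_f`), its input alphabet is empty, its stack alphabet is `Γ`, its
initial stack symbol is `⊥`, and its pushed languages are defined through the projected
`(n−1)`-stack OMPA `M' = proj M`. -/
def gpaOf {n : ℕ} {Q A Γ : Type} (M : MPA (n+2) Q A Γ) : GPA (Q ⊕ Bool) Empty Γ where
  δ := fun p γ _ p' =>
    match p, p' with
    | Sum.inr false, Sum.inl q' =>
        {w | γ = M.bot ∧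
          ∃ u ∈ (MPA.proj M).LangFrom M.q0 M.γ0 q', w = u.reverse ++ [M.bot]}
    | Sum.inl q, Sum.inr true => {w | γ = M.bot ∧ q ∈ M.F ∧ w = []}
    | Sum.inl q, Sum.inl q' =>
        {w | γ ≠ M.bot ∧
          ∃ (q₁ : Q) (γ' : Γ) (a : Option A),
            M.Δ q (fun j => if j = Fin.last (n+1) then some γ else some M.bot) a q₁
              (fun j => if j = 0 then [γ', M.bot]
                        else if j = Fin.last (n+1) then [] else [M.bot]) ∧
            ∃ u ∈ (MPA.proj M).LangFrom q₁ γ' q', w = u.reverse}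
    | _, _ => ∅
  p0 := Sum.inr false
  γ0 := M.bot
  F := {Sum.inr true}

namespace MPA

variable {n : ℕ} {Q A Γ : Type}

theorem Reaches.trans {M : MPA n Q A Γ} {c c' c'' : Q × (Fin n → List Γ)} {τ τ' : List A}
    (h : M.Reaches c τ c') (h' : M.Reaches c' τ' c'') : M.Reaches c (τ ++ τ') c'' := by
  induction h with
  | refl => simpa using h'
  | step hs _ ih => rw [List.append_assoc]; exact .step hs (ih h')

theorem IsStack.tail_eq_nil {b : Γ} {w : List Γ} (h : IsStack b (b :: w)) : w = [] := by
  obtain ⟨v, hv, hb⟩ := h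
  cases v with
  | nil => simpa using hv
  | cons x v => simp_all

theorem IsStack.of_cons {b g : Γ} {w : List Γ} (h : IsStack b (g :: w)) (hg : g ≠ b) :
    IsStack b w := by
  obtain ⟨v, hv, hb⟩ := h
  cases v with
  | nil => simp_all
  | cons x v => exact ⟨v, by simp_all, by simp_all⟩

theorem IsStack.append {b : Γ} {u w : List Γ} (h : IsStack b w) (hu : b ∉ u) :
    IsStack b (u ++ w) := by
  obtain ⟨v, rfl, hb⟩ := h
  exact ⟨u ++ v, by simp, by simp [hu, hb]⟩

theorem isStack_singleton (b : Γ) : IsStack b [b] := ⟨[], by simp, by simp⟩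

/-- A run of `proj M` labelled `u` is a run of `M` that pushes `u` letter by letter on the last
stack. -/
theorem exists_run_of_proj {M : MPA (n+1) Q A Γ} (hwf : M.WF)
    {c c' : Q × (Fin n → List Γ)} {u : List Γ} (h : (proj M).Reaches c u c') (w : List Γ)
    (hw : IsStack M.bot w) :
    IsStack M.bot (u.reverse ++ w) ∧
    ∃ τ, M.Reaches (c.1, Fin.snoc (α := fun _ => List Γ) c.2 w) τ
      (c'.1, Fin.snoc (α := fun _ => List Γ) c'.2 (u.reverse ++ w)) := by
  induction h generalizing w with
  | refl c => exact ⟨by simpa using hw, [], by simpa using Reaches.refl _⟩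
  | @step c b c₁ u c' hs _ ih =>
    obtain ⟨γ, α, v, ⟨a, hΔ⟩, hv⟩ := hs
    have hb : M.bot ∉ b.toList := by
      have := ((hwf.2 _ _ _ _ _ hΔ) (Fin.last n)).2.1
      simpa using this
    obtain ⟨h1, τ, h2⟩ := ih (b.toList ++ w) (hw.append hb)
    have e : (b.toList ++ u).reverse ++ w = u.reverse ++ (b.toList ++ w) := by
      cases b <;> simp
    rw [e]
    refine ⟨h1, _, .step (a := a) ?_ h2⟩
    refine ⟨_, _, Fin.snoc (α := fun _ => List Γ) v w, hΔ, fun i => ?_⟩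
    refine Fin.lastCases ?_ (fun j => ?_) i
    · simpa using hw
    · simpa [proj] using hv j

/-- Along a run of `M` that ends with all stacks empty, the steps before the first pop from the
last stack form a run of `proj M`, and `gpaOf M` accepts from what is then on the last stack. -/
theorem exists_gpa_run {M : MPA (n+2) Q A Γ} (hnf : M.NormalForm)
    {c c' : Q × (Fin (n+2) → List Γ)} {τ : List A} (h : M.Reaches c τ c')
    (hF : c'.1 ∈ M.F) (hc' : c'.2 = fun _ => [M.bot]) :
    ∃ (q : Q) (u : List Γ) (σ : List Empty),
      (proj M).Reaches (c.1, fun i => c.2 i.castSucc) u (q, fun _ => [M.bot]) ∧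
      (gpaOf M).Reaches (Sum.inl q, u.reverse ++ c.2 (Fin.last _)) σ (Sum.inr true, []) := by
  induction h with
  | refl c =>
    refine ⟨c.1, [], _, ?_, .step (a := none) (c' := (Sum.inr true, [])) ?_ (.refl _)⟩
    · rw [hc']; exact .refl _
    · exact ⟨M.bot, [], [], by simp [hc'], by simp [gpaOf, hF], by simp⟩
  | @step c a c₁ τ c' hs _ ih =>
    obtain ⟨q, u, σ, hp, hg⟩ := ih hF hc'
    obtain ⟨γ, α, w, hΔ, hw⟩ := hs
    -- a transition that leaves the last stack unpopped is a step of the projection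
    have key : γ (Fin.last _) = none → (α (Fin.last _)).length ≤ 1 →
        ∃ (q : Q) (u : List Γ) (σ : List Empty),
          (proj M).Reaches (c.1, fun i => c.2 i.castSucc) u (q, fun _ => [M.bot]) ∧
          (gpaOf M).Reaches (Sum.inl q, u.reverse ++ c.2 (Fin.last _)) σ
            (Sum.inr true, []) := by
      intro h1 h2
      obtain ⟨b, hb⟩ : ∃ b : Option Γ, α (Fin.last _) = b.toList := by
        match hα : α (Fin.last _), h2 with
        | [], _ => exact ⟨none, rfl⟩
        | [x], _ => exact ⟨some x, rfl⟩
      refine ⟨q, b.toList ++ u, σ, .step ?_ hp, ?_⟩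
      · refine ⟨fun i => γ i.castSucc, fun i => α i.castSucc, fun i => w i.castSucc,
          ⟨a, ?_⟩, fun i => hw i.castSucc⟩
        have e1 : (Fin.snoc (α := fun _ => Option Γ) (fun i => γ i.castSucc) none) = γ := by
          rw [← h1]; exact Fin.snoc_init_self γ
        have e2 : (Fin.snoc (α := fun _ => List Γ) (fun i => α i.castSucc) b.toList) = α := by
          rw [← hb]; exact Fin.snoc_init_self α
        rw [e1, e2]; exact hΔ
      · obtain ⟨h3, h4, _⟩ := hw (Fin.last _)
        rw [h1] at h3
        rw [h4, hb] at hg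
        rw [h3]
        cases b <;> simpa using hg
    rcases hnf _ _ _ _ _ hΔ with ⟨_, h2, h3⟩ | ⟨i, hi, hlt, hgt, ⟨g, hg1, hg2⟩,
      ⟨g', hg', hα0⟩, hαlt, hαge⟩
    · exact key (h2 _ (Fin.last_pos.ne')) (h3 _ (Fin.last_pos.ne')).1
    · rcases (Fin.le_last i).lt_or_eq with hil | rfl
      · exact key (hgt _ hil) (by simp [hαge _ hil.le])
      -- the remaining transitions pop the last stack: a cut of the run
      · have hw0 : ∀ j, j < Fin.last (n+1) → w j = [] := fun j hj => by
          obtain ⟨h1, _, h3⟩ := hw j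
          rw [h1, hlt j hj] at h3
          exact IsStack.tail_eq_nil h3
        have hc : (fun i : Fin (n+1) => c.2 i.castSucc) = fun _ => [M.bot] := by
          funext j
          rw [(hw _).1, hlt _ (Fin.castSucc_lt_last j), hw0 _ (Fin.castSucc_lt_last j)]
          rfl
        have hc₁ : (fun i : Fin (n+1) => c₁.2 i.castSucc) =
            fun i => if i = 0 then [g', M.bot] else [M.bot] := by
          funext j
          rw [(hw _).2.1, hw0 _ (Fin.castSucc_lt_last j)]
          split_ifs with hj
          · subst hj; simpa using hα0
          · rw [hαlt _ (by simpa [Fin.pos_iff_ne_zero] using hj) (Fin.castSucc_lt_last j)]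
            rfl
        refine ⟨c.1, [], _, ?_,
          .step (a := none) (c' := (Sum.inl q, u.reverse ++ c₁.2 (Fin.last _))) ?_ hg⟩
        · rw [hc]; exact .refl _
        · refine ⟨g, w (Fin.last _), u.reverse, ?_, ?_, ?_⟩
          · simp [(hw _).1, hg1]
          · refine ⟨hg2, c₁.1, g', a, ?_, u, ?_, rfl⟩
            · convert hΔ using 1
              · funext j
                split_ifs with hj
                · rw [hj, hg1]
                · rw [hlt j (Fin.lt_last_iff_ne_last.2 hj)]
              · funext j
                split_ifs with hj hj'
                · rw [hj, hα0]
                · rw [hj', hαge _ le_rfl]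
                · rw [hαlt j (Fin.pos_iff_ne_zero.2 hj) (Fin.lt_last_iff_ne_last.2 hj')]
            · rw [hc₁] at hp; exact hp
          · simp [(hw _).2.1, hαge _ le_rfl]

/-- An accepting run of `gpaOf M` from a state of `M` and pushdown content `w` is matched by an
accepting run of `M` whose last stack contains `w` and whose other stacks are empty. -/
theorem exists_run_of_gpa {M : MPA (n+2) Q A Γ} (hwf : M.WF)
    {c c' : (Q ⊕ Bool) × List Γ} {σ : List Empty} (h : (gpaOf M).Reaches c σ c')
    (hc' : c'.1 = Sum.inr true) (p : Q) (hc : c.1 = Sum.inl p) (hst : IsStack M.bot c.2) :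
    ∃ q ∈ M.F, ∃ τ, M.Reaches (p, Fin.snoc (α := fun _ => List Γ) (fun _ => [M.bot]) c.2) τ
      (q, fun _ => [M.bot]) := by
  induction h generalizing p with
  | refl c => simp_all
  | @step c a c₁ σ c' hs _ ih =>
    obtain ⟨c1, c2⟩ := c
    obtain ⟨d1, d2⟩ := c₁
    obtain ⟨g, w, u, h1, h2, h3⟩ := hs
    dsimp only at hc hst h1 h2 h3
    subst hc h1 h3
    match d1, h2 with
    | Sum.inr true, h2 =>
      obtain ⟨rfl, hF, -⟩ := h2
      obtain rfl := hst.tail_eq_nil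
      refine ⟨p, hF, [], ?_⟩
      have e : Fin.snoc (α := fun _ => List Γ) (fun _ : Fin (n+1) => [M.bot]) [M.bot] =
          fun _ => [M.bot] := by
        funext i
        refine Fin.lastCases ?_ (fun j => ?_) i <;> simp
      rw [e]
      exact .refl _
    | Sum.inr false, h2 => exact h2.elim
    | Sum.inl p', h2 =>
      obtain ⟨hg, q₁, γ', b, hΔ, u, hu, rfl⟩ := h2
      obtain ⟨hst', τ₁, hτ₁⟩ := exists_run_of_proj hwf hu w (hst.of_cons hg)
      obtain ⟨q, hq, τ₂, hτ₂⟩ := ih hc' p' rfl hst'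
      refine ⟨q, hq, _, .step (a := b) ?_ (hτ₁.trans hτ₂)⟩
      refine ⟨_, _, Fin.snoc (α := fun _ => List Γ) (fun _ => []) w, hΔ, fun i => ?_⟩
      refine Fin.lastCases ?_ (fun j => ?_) i
      · simpa using hst
      · by_cases hj : j = 0
        · subst hj
          simpa [(Fin.castSucc_lt_last (0 : Fin (n+1))).ne, proj] using isStack_singleton M.bot
        · simpa [hj, (Fin.castSucc_lt_last j).ne, proj] using isStack_singleton M.bot

end MPA

/-- `L(M) ≠ ∅` iff `L(P) ≠ ∅` for the GPA `P` constructed from `M`. -/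
theorem gpaOf_emptiness {n : ℕ} {Q A Γ : Type} [Finite Q] [Finite A] [Finite Γ]
    (M : MPA (n+2) Q A Γ) (hwf : M.WF) (hord : M.Ordered) (hnf : M.NormalForm) :
    M.Lang ≠ ∅ ↔ (gpaOf M).Lang ≠ ∅ := by
  rw [← Set.nonempty_iff_ne_empty, ← Set.nonempty_iff_ne_empty]
  constructor
  · rintro ⟨τ, qf, hqf, h⟩
    obtain ⟨q, u, σ, hp, hg⟩ := MPA.exists_gpa_run hnf h hqf rfl
    refine ⟨_, Sum.inr true, rfl, .step (a := none) ?_ hg⟩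
    refine ⟨M.bot, [], u.reverse ++ [M.bot], rfl, ⟨rfl, u, ?_, rfl⟩, ?_⟩
    · simpa [MPA.init, MPA.LangFrom, MPA.proj] using hp
    · simp [MPA.init]
  · rintro ⟨σ, pf, hpf, h⟩
    obtain rfl : pf = Sum.inr true := hpf
    cases h with
    | @step _ a c₁ σ _ hs hr =>
      obtain ⟨d1, d2⟩ := c₁
      obtain ⟨g, w, u, h1, h2, h3⟩ := hs
      obtain ⟨rfl, rfl⟩ : M.bot = g ∧ [] = w := by simpa [gpaOf] using h1
      match d1, h2 with
      | Sum.inr _, h2 => exact h2.elim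
      | Sum.inl p, h2 =>
        obtain ⟨-, u, hu, rfl⟩ := h2
        obtain ⟨hst, τ₁, hτ₁⟩ :=
          MPA.exists_run_of_proj hwf hu [M.bot] (MPA.isStack_singleton _)
        obtain rfl : d2 = u.reverse ++ [M.bot] := by simpa using h3
        obtain ⟨q, hq, τ₂, hτ₂⟩ := MPA.exists_run_of_gpa hwf hr rfl p rfl hst
        refine ⟨τ₁ ++ τ₂, q, hq, ?_⟩
        have e : M.init = Fin.snoc (α := fun _ => List Γ)
            (fun i : Fin (n+1) => if i = 0 then [M.γ0, M.bot] else [M.bot]) [M.bot] := by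
          funext i
          refine Fin.lastCases ?_ (fun j => ?_) i <;> simp [MPA.init]
        rw [e]
        exact hτ₁.trans hτ₂
end

section
/- Let M be an ordered multi-pushdown automaton with n > 1 stacks in normal form, A' an M-automaton without ε-transitions with state set Q_{A'}, M_{[1,n[} the OMPA obtained from M by discarding transitions that pop from the n-th stack, and M' the (n−1)-OMPA product of M_{[1,n[} with A'. Then ((q₁,p₁),w₁,…,w_{n−1}) reaches ((q₂,p₂),⊥,…,⊥) by a finite run of T(M') if and only if there exists a word v ∈ (Γ∖{⊥})* such that (q₁,w₁,…,w_{n−1},⊥) reaches (q₂,⊥,…,⊥,v⊥) by a finite run of T(M_{[1,n[}) and A' has a run from p₂ to p₁ reading v. -/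
/-- An `M`-automaton: a finite automaton over the stack alphabet `Γ` whose set of initial
states is the set `Q` of states of the MPA (plus possibly extra states `S`). -/
structure MAut (Γ Q S : Type) where
  Δ : (Q ⊕ S) → Option Γ → (Q ⊕ S) → Prop
  F : Set (Q ⊕ S)

/-- The configuration `(q, w₁, …, wₙ)` of `M` is accepted by the `M`-automaton `T`:
all stacks are proper stack contents and the word `w₁w₂⋯wₙ` is accepted by `T` started
from the initial state `q`. -/
def MAut.AcceptConf {n : ℕ} {Q A Γ S : Type} (M : MPA n Q A Γ) (T : MAut Γ Q S)
    (c : Q × (Fin n → List Γ)) : Prop :=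
  (∀ i, MPA.IsStack M.bot (c.2 i)) ∧
  ∃ f ∈ T.F, EvalRel T.Δ (Sum.inl c.1) (List.ofFn c.2).flatten f

/-- The size of an `M`-automaton: numbers of states, alphabet symbols and transitions. -/
noncomputable def MAut.size {Γ Q S : Type} (T : MAut Γ Q S) : ℕ :=
  Nat.card (Q ⊕ S) + Nat.card Γ +
    Nat.card {t : (Q ⊕ S) × Option Γ × (Q ⊕ S) // T.Δ t.1 t.2.1 t.2.2}
/-- The product `M'` of `M_{[1,n[}` with the `M`-automaton `A'`: an `(n−1)`-stack MPA with
states `Q × Q_{A'}` that performs the transitions of `M_{[1,n[}` on the first `n−1` stacks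
and simulates (backwards) a run of `A'` reading the symbol pushed on the last stack. -/
def prodAut {n : ℕ} {Q A Γ S : Type} (M : MPA (n+1) Q A Γ) (T : MAut Γ Q S) :
    MPA n (Q × (Q ⊕ S)) A Γ where
  bot := M.bot
  Δ := fun qp γ a qp' α =>
    ∃ αn : List Γ, (αn = [] ∨ ∃ g : Γ, g ≠ M.bot ∧ αn = [g]) ∧
      M.Δ qp.1 (Fin.snoc γ none) a qp'.1 (Fin.snoc α αn) ∧
      EvalRel T.Δ qp'.2 αn qp.2
  q0 := (M.q0, Sum.inl M.q0)
  γ0 := M.γ0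
  F := ∅

theorem EvalRel.append {Q A : Type} {Δ : Q → Option A → Q → Prop} {p q r : Q} {x y : List A}
    (h : EvalRel Δ p x q) (h' : EvalRel Δ q y r) : EvalRel Δ p (x ++ y) r := by
  induction h with
  | refl => exact h'
  | step hs _ ih =>
    rw [List.append_assoc]
    exact .step hs (ih h')

theorem EvalRel.split {Q A : Type} {Δ : Q → Option A → Q → Prop} {p r : Q} {x y : List A}
    (h : EvalRel Δ p (x ++ y) r) : ∃ q, EvalRel Δ p x q ∧ EvalRel Δ q y r := by
  generalize hz : x ++ y = z at h
  induction h generalizing x with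
  | refl q =>
    obtain ⟨rfl, rfl⟩ := List.append_eq_nil_iff.1 hz
    exact ⟨q, .refl q, .refl q⟩
  | @step q a q' w q'' hs hr ih =>
    cases a with
    | none =>
      obtain ⟨s, h1, h2⟩ := ih (x := x) (by simpa using hz)
      exact ⟨s, .step (a := none) hs h1, h2⟩
    | some b =>
      cases x with
      | nil =>
        refine ⟨q, .refl q, ?_⟩
        obtain rfl : y = (some b).toList ++ w := by simpa using hz
        exact .step hs hr
      | cons c x =>
        simp only [Option.toList_some, List.cons_append, List.nil_append, List.cons.injEq] at hz
        obtain ⟨rfl, hz⟩ := hz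
        obtain ⟨s, h1, h2⟩ := ih hz
        exact ⟨s, .step (a := some c) hs h1, h2⟩

theorem EvalRel.eq_of_nil {Q A : Type} {Δ : Q → Option A → Q → Prop}
    (hε : ∀ s s', ¬ Δ s none s') {p r : Q} (h : EvalRel Δ p [] r) : p = r := by
  generalize hz : ([] : List A) = z at h
  cases h with
  | refl => rfl
  | @step _ a _ _ _ hs _ =>
    cases a with
    | none => exact absurd hs (hε _ _)
    | some b => simp at hz

namespace MPA

variable {n : ℕ} {Q A Γ S : Type}

/-- In normal form, a transition that pops nothing from the last stack pushes there a word of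
`(Γ∖{⊥}) ∪ {ε}`. -/
theorem NormalForm.push_last {M : MPA (n+1) Q A Γ} (hnf : M.NormalForm)
    {q q' : Q} {γ : Fin (n+1) → Option Γ} {a : Option A} {α : Fin (n+1) → List Γ}
    (h : M.Δ q γ a q' α) (hγ : γ (Fin.last n) = none) :
    α (Fin.last n) = [] ∨ ∃ g : Γ, g ≠ M.bot ∧ α (Fin.last n) = [g] := by
  rcases hnf q γ a q' α h with ⟨⟨g, hg⟩, -, hα⟩ | ⟨i, -, -, -, ⟨g, hg, -⟩, -, -, hα⟩
  · have h0 : Fin.last n ≠ 0 := by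
      intro h0
      simp [← h0, hγ] at hg
    obtain ⟨hl, hb⟩ := hα _ h0
    generalize α (Fin.last n) = l at hl hb
    match l, hl, hb with
    | [], _, _ => exact .inl rfl
    | [g], _, hb => exact .inr ⟨g, fun e => hb (by simp [e]), rfl⟩
  · exact .inl (hα _ (Fin.le_last i))

/-- A run of the product lifts to a run of `M_{[1,n[}` whose last stack starts from any `u⊥`. -/
theorem prodAut_lift (M : MPA (n+1) Q A Γ) (T : MAut Γ Q S)
    {c c' : (Q × (Q ⊕ S)) × (Fin n → List Γ)} {τ : List A}
    (h : (prodAut M T).Reaches c τ c') (u : List Γ) (hu : M.bot ∉ u) :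
    ∃ v, M.bot ∉ v ∧
      M.restrictLast.Reaches (c.1.1, Fin.snoc c.2 (u ++ [M.bot])) τ
        (c'.1.1, Fin.snoc c'.2 (v ++ u ++ [M.bot])) ∧
      EvalRel T.Δ c'.1.2 v c.1.2 := by
  induction h generalizing u with
  | refl c => exact ⟨[], by simp, .refl _, .refl _⟩
  | @step c a d τ c' hs _ ih =>
    obtain ⟨γ, α, w, ⟨αn, hαn, hΔ, hT⟩, hi⟩ := hs
    have hb : M.bot ∉ αn := by
      rcases hαn with rfl | ⟨g, hg, rfl⟩
      · simp
      · simpa using hg.symm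
    obtain ⟨v, hv, hr, he⟩ := ih (αn ++ u) (by simp [hb, hu])
    refine ⟨v ++ αn, by simp [hv, hb], ?_, he.append hT⟩
    rw [List.append_assoc v αn u]
    refine .step ⟨Fin.snoc γ none, Fin.snoc α αn, Fin.snoc w (u ++ [M.bot]),
      ⟨hΔ, by simp⟩, fun i => ?_⟩ hr
    induction i using Fin.lastCases with
    | last =>
      have hs : IsStack M.restrictLast.bot (u ++ [M.bot]) := ⟨u, rfl, hu⟩
      simpa using hs
    | cast i =>
      obtain ⟨h1, h2, h3⟩ := hi i
      have hs : IsStack M.restrictLast.bot (c.2 i) := h3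
      simpa using ⟨h1, h2, hs⟩

/-- A run of `M_{[1,n[}` grows the last stack from `u` to `vu`, and it projects to a run of the
product along every run of `A'` reading `v`. Here `u` is the whole initial content of the
stack, its bottom symbol included. -/
theorem prodAut_project {M : MPA (n+1) Q A Γ} (T : MAut Γ Q S) (hnf : M.NormalForm)
    (hε : ∀ s s', ¬ T.Δ s none s')
    {c c' : Q × (Fin (n+1) → List Γ)} {τ : List A}
    (h : M.restrictLast.Reaches c τ c') (u : List Γ) (hu : c.2 (Fin.last n) = u) :
    ∃ v, c'.2 (Fin.last n) = v ++ u ∧ ∀ p₁ p₂, EvalRel T.Δ p₂ v p₁ →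
      (prodAut M T).Reaches ((c.1, p₁), Fin.init c.2) τ ((c'.1, p₂), Fin.init c'.2) := by
  induction h generalizing u with
  | refl c =>
    refine ⟨[], by simpa using hu, fun p₁ p₂ he => ?_⟩
    rw [he.eq_of_nil hε]
    exact .refl _
  | @step c a d τ c' hs _ ih =>
    obtain ⟨γ, α, w, ⟨hΔ, hγ⟩, hi⟩ := hs
    obtain ⟨hl, hl', -⟩ := hi (Fin.last n)
    obtain ⟨v, hv, hr⟩ := ih (α (Fin.last n) ++ u) (by
      rw [hl', ← hu, hl, hγ]; rfl)
    refine ⟨v ++ α (Fin.last n), by simpa using hv, fun p₁ p₂ he => ?_⟩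
    obtain ⟨p, h1, h2⟩ := he.split
    refine .step (c' := ((d.1, p), Fin.init d.2))
      ⟨Fin.init γ, Fin.init α, Fin.init w, ⟨α (Fin.last n), hnf.push_last hΔ hγ, ?_, h2⟩,
        fun i => hi i.castSucc⟩ (hr p p₂ h1)
    rw [← hγ, Fin.snoc_init_self, Fin.snoc_init_self]
    exact hΔ

end MPA

/-- A run of the product `M'` from `((q₁,p₁),w₁,…,w_{n−1})` to
`((q₂,p₂),⊥,…,⊥)` corresponds exactly to a run of `T(M_{[1,n[})` from `(q₁,w₁,…,w_{n−1},⊥)`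
to `(q₂,⊥,…,⊥,v⊥)` together with a run of `A'` from `p₂` to `p₁` reading `v`. -/
theorem prodAut_correct {n : ℕ} {Q A Γ S : Type} [Finite Q] [Finite A] [Finite Γ] [Finite S]
    (M : MPA (n+1) Q A Γ) (T : MAut Γ Q S)
    (hwf : M.WF) (hord : M.Ordered) (hnf : M.NormalForm)
    (hε : ∀ s s', ¬ T.Δ s none s')
    (q₁ q₂ : Q) (p₁ p₂ : Q ⊕ S) (w : Fin n → List Γ)
    (hw : ∀ i, MPA.IsStack M.bot (w i)) :
    (∃ τ : List A, (prodAut M T).Reaches ((q₁, p₁), w) τ ((q₂, p₂), fun _ => [M.bot])) ↔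
    (∃ v : List Γ, M.bot ∉ v ∧
      (∃ τ : List A,
        (MPA.restrictLast M).Reaches (q₁, Fin.snoc w [M.bot]) τ
          (q₂, Fin.snoc (fun _ => [M.bot]) (v ++ [M.bot]))) ∧
      EvalRel T.Δ p₂ v p₁) := by
  constructor
  · rintro ⟨τ, h⟩
    obtain ⟨v, hv, hr, he⟩ := MPA.prodAut_lift M T h [] (by simp)
    exact ⟨v, hv, ⟨τ, by simpa using hr⟩, he⟩
  · rintro ⟨v, -, ⟨τ, h⟩, he⟩
    obtain ⟨v', hv', hr⟩ := MPA.prodAut_project T hnf hε h [M.bot] (by simp)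
    obtain rfl : v = v' := by simpa using hv'
    exact ⟨τ, by simpa using hr p₁ p₂ he⟩
end
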